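/- For every nonnegative integer n and nonzero complex numbers q, x with no vanishing denominators: sum over k from 0 to n of (q^{-3n};q^3)_k * (x;q)_k (1/x;q)_k / ((q;q)_k (-1;q)_k (q^{1/2};q)_k (-q^{1/2};q)_k (q^{-3n};q)_k) * q^k equals (1/2) * ((qx;q^3)_n (q^2/x;q^3)_n)/((q;q^3)_n (q^2;q^3)_n) + (1/2) * ((q^2 x;q^3)_n (q/x;q^3)_n)/((q;q^3)_n (q^2;q^3)_n). -/

import Mathlib

/-- q-Pochhammer symbol `(a; q)_k`. -/
noncomputable def qpoch (a q : ℂ) (k : ℕ) : ℂ := ∏ j ∈ Finset.range k, (1 - a * q ^ j)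

/-!
Pairing `x` with `1 / x` through
`(x; q)_k (q/x; q)_k + (1/x; q)_k (qx; q)_k = (1 + q ^ k) (x; q)_k (1/x; q)_k`
exhibits the sum as the average of two instances, at `x` and at `1 / x`, of the `q`-Gosper sum
`∑ (q⁻³ⁿ; q³)_k (x; q)_k (q/x; q)_k q ^ k / ((q; q)_{2k} (q⁻³ⁿ; q)_k)
  = (qx; q³)_n (q²/x; q³)_n / ((q; q³)_n (q²; q³)_n)`.
The latter follows by induction on `n` from a telescoping relation between the summands with
parameters `b` and `b q³`, where `b = q⁻³ⁿ⁻³`. The induction runs when `q ^ i ≠ 1` for all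
`1 ≤ i ≤ 3n`; the other values of `q`, such as a primitive root of unity of order `2n` when
`3 ∣ n`, are reached by continuity in `q ^ (1/2)`.
-/

open Filter Topology

section QPochhammer

variable (a q : ℂ) (k : ℕ)

lemma qpoch_zero : qpoch a q 0 = 1 := Finset.prod_range_zero _

lemma qpoch_succ : qpoch a q (k + 1) = qpoch a q k * (1 - a * q ^ k) :=
  Finset.prod_range_succ _ _

lemma qpoch_add (m : ℕ) : qpoch a q (k + m) = qpoch a q k * qpoch (a * q ^ k) q m := by
  simp only [qpoch, Finset.prod_range_add, pow_add, mul_assoc]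

lemma qpoch_succ_left : qpoch a q (k + 1) = (1 - a) * qpoch (a * q) q k := by
  rw [add_comm, qpoch_add, qpoch_succ, qpoch_zero, pow_zero, pow_one, one_mul, mul_one]

lemma qpoch_three : qpoch a q 3 = (1 - a) * (1 - a * q) * (1 - a * q ^ 2) := by
  simp [qpoch, Finset.prod_range_succ]

lemma qpoch_mul_qpoch_neg : qpoch a q k * qpoch (-a) q k = qpoch (a ^ 2) (q ^ 2) k := by
  simp only [qpoch, ← Finset.prod_mul_distrib]
  exact Finset.prod_congr rfl fun j _ => by ring

lemma qpoch_two_mul :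
    qpoch a q (2 * k) = qpoch a (q ^ 2) k * qpoch (a * q) (q ^ 2) k := by
  induction k with
  | zero => simp only [mul_zero, qpoch_zero, mul_one]
  | succ k ih => rw [mul_add_one, qpoch_succ, qpoch_succ, ih, qpoch_succ, qpoch_succ]; ring

lemma qpoch_neg_one_mul : qpoch (-1) q k * (1 + q ^ k) = 2 * qpoch (-q) q k := by
  have h := (qpoch_succ (-1) q k).symm.trans (qpoch_succ_left (-1) q k)
  rw [neg_one_mul q] at h
  linear_combination h

lemma qpoch_mul_cube_mul :
    qpoch (a * q ^ 3) q k * ((1 - a) * (1 - a * q) * (1 - a * q ^ 2)) =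
      qpoch a q k * ((1 - a * q ^ k) * (1 - a * q ^ (k + 1)) * (1 - a * q ^ (k + 2))) := by
  have h : qpoch a q (3 + k) = qpoch a q (k + 3) := by rw [add_comm]
  rw [qpoch_add, qpoch_add, qpoch_three, qpoch_three] at h
  linear_combination h

variable {a q k}

lemma qpoch_ne_zero_iff : qpoch a q k ≠ 0 ↔ ∀ j < k, 1 - a * q ^ j ≠ 0 := by
  simp only [qpoch, Finset.prod_ne_zero_iff, Finset.mem_range]

lemma qpoch_ne_zero_of_le {j : ℕ} (hjk : j ≤ k) (h : qpoch a q k ≠ 0) : qpoch a q j ≠ 0 :=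
  qpoch_ne_zero_iff.2 fun i hi => qpoch_ne_zero_iff.1 h i (hi.trans_le hjk)

lemma qpoch_inv_pow_ne_zero {j : ℕ} (hq : q ≠ 0) (hjk : j ≤ k) (h : qpoch q q k ≠ 0) :
    qpoch (q ^ k)⁻¹ q j ≠ 0 := by
  refine qpoch_ne_zero_iff.2 fun i hi => ?_
  obtain ⟨d, rfl⟩ : ∃ d, k = i + (d + 1) := ⟨k - i - 1, by omega⟩
  have hd : q * q ^ d - 1 ≠ 0 := by
    rw [← neg_sub]
    exact neg_ne_zero.2 (qpoch_ne_zero_iff.1 h d (by omega))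
  have hfactor : 1 - (q ^ (i + (d + 1)))⁻¹ * q ^ i = (q * q ^ d - 1) / q ^ (d + 1) := by
    field_simp
    ring
  rw [hfactor]
  exact div_ne_zero hd (pow_ne_zero _ hq)

end QPochhammer

/-- The summand of the `q`-Gosper sum, with an arbitrary parameter `a` in place of `q⁻³ⁿ`. -/
noncomputable def gosperTerm (a q x : ℂ) (k : ℕ) : ℂ :=
  qpoch a (q ^ 3) k * (qpoch x q k * qpoch (q / x) q k) /
    (qpoch q q (2 * k) * qpoch a q k) * q ^ k

/-- The value of the `q`-Gosper sum. -/
noncomputable def gosperProd (n : ℕ) (q x : ℂ) : ℂ :=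
  (qpoch (q * x) (q ^ 3) n * qpoch (q ^ 2 / x) (q ^ 3) n) /
    (qpoch q (q ^ 3) n * qpoch (q ^ 2) (q ^ 3) n)

/-- The summand of the extended `q`-Gosper sum, with an arbitrary parameter `a` in place of
`q⁻³ⁿ` and with `s` standing for `q ^ (1/2)`. -/
noncomputable def gosperExtTerm (a q x s : ℂ) (k : ℕ) : ℂ :=
  qpoch a (q ^ 3) k * (qpoch x q k * qpoch (1 / x) q k) /
    (qpoch q q k * qpoch (-1) q k * qpoch s q k * qpoch (-s) q k * qpoch a q k) * q ^ k

/-- The Wilf–Zeilberger certificate of the `q`-Gosper sum: the rational factor by which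
`gosperTerm b q x k` is multiplied to give the telescoping companion. -/
noncomputable def gosperCert (b q : ℂ) (k : ℕ) : ℂ :=
  (1 - b * q / q ^ k) * (1 - b * q ^ (3 * k)) / ((1 - b * q ^ k) * (1 - b * q ^ (k + 1)))

section GosperSum

variable {b q x : ℂ}

lemma gosperTerm_zero : gosperTerm b q x 0 = 1 := by
  simp [gosperTerm, qpoch_zero]

lemma gosperTerm_succ (k : ℕ) :
    gosperTerm b q x (k + 1) = gosperTerm b q x k *
      (q * ((1 - b * q ^ (3 * k)) * (1 - x * q ^ k) * (1 - q / x * q ^ k)) /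
        ((1 - q ^ (2 * k + 1)) * (1 - q ^ (2 * k + 2)) * (1 - b * q ^ k))) := by
  simp only [gosperTerm, mul_add_one, qpoch_succ]
  rw [div_mul_eq_mul_div, div_mul_eq_mul_div _ (qpoch q q (2 * k) * qpoch b q k), div_mul_div_comm]
  congr 1 <;> ring

lemma gosperTerm_mul_cube {k : ℕ} (hb : qpoch b q (k + 3) ≠ 0) :
    gosperTerm (b * q ^ 3) q x k =
      gosperTerm b q x k * ((1 - b * q) * (1 - b * q ^ 2) * (1 - b * q ^ (3 * k)) /
        ((1 - b * q ^ k) * (1 - b * q ^ (k + 1)) * (1 - b * q ^ (k + 2)))) := by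
  have hfactor := qpoch_ne_zero_iff.1 hb
  have h0 : 1 - b ≠ 0 := by simpa using hfactor 0 (by omega)
  have h1 : 1 - b * q ≠ 0 := by simpa using hfactor 1 (by omega)
  have h2 := hfactor 2 (by omega)
  have hk0 := hfactor k (by omega)
  have hk1 := hfactor (k + 1) (by omega)
  have hk2 := hfactor (k + 2) (by omega)
  have hbk := qpoch_ne_zero_of_le (Nat.le_add_right k 3) hb
  have hnum : qpoch (b * q ^ 3) (q ^ 3) k =
      qpoch b (q ^ 3) k * (1 - b * q ^ (3 * k)) / (1 - b) := by
    rw [eq_div_iff h0, pow_mul, ← qpoch_succ, qpoch_succ_left, mul_comm]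
  have hden : qpoch (b * q ^ 3) q k =
      qpoch b q k * ((1 - b * q ^ k) * (1 - b * q ^ (k + 1)) * (1 - b * q ^ (k + 2))) /
        ((1 - b) * (1 - b * q) * (1 - b * q ^ 2)) := by
    rw [eq_div_iff (mul_ne_zero (mul_ne_zero h0 h1) h2), qpoch_mul_cube_mul]
  rw [gosperTerm, gosperTerm, hnum, hden]
  field_simp

lemma gosperTerm_wz (hq : q ≠ 0) (hx : x ≠ 0) {m : ℕ} (hqm : qpoch q q (2 * m + 2) ≠ 0)
    (hb : qpoch b q (m + 3) ≠ 0) :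
    (1 - b * q) * (1 - b * q ^ 2) * gosperTerm b q x (m + 1) -
        (1 - b * q * x) * (1 - b * q ^ 2 / x) * gosperTerm (b * q ^ 3) q x m =
      (1 - b * q) * (1 - b * q ^ 2) *
        (gosperTerm b q x (m + 1) * gosperCert b q (m + 1) -
          gosperTerm b q x m * gosperCert b q m) := by
  have hq1 : 1 - q ^ (2 * m + 1) ≠ 0 := by
    simpa only [pow_succ'] using qpoch_ne_zero_iff.1 hqm (2 * m) (by omega)
  have hq2 : 1 - q ^ (2 * m + 2) ≠ 0 := by
    simpa only [pow_succ'] using qpoch_ne_zero_iff.1 hqm (2 * m + 1) (by omega)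
  have hb0 := qpoch_ne_zero_iff.1 hb m (by omega)
  have hb1 := qpoch_ne_zero_iff.1 hb (m + 1) (by omega)
  have hb2 := qpoch_ne_zero_iff.1 hb (m + 2) (by omega)
  have hcert : gosperCert b q (m + 1) =
      1 - b / q ^ m * ((1 - q ^ (2 * m + 1)) * (1 - q ^ (2 * m + 2))) /
        ((1 - b * q ^ (m + 1)) * (1 - b * q ^ (m + 2))) := by
    rw [gosperCert]
    field_simp
    ring
  have hfactor : (1 - b * q * x) * (1 - b * q ^ 2 / x) =
      (1 - b * q / q ^ m) * (1 - b * q ^ (m + 2)) +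
        b * q / q ^ m * ((1 - x * q ^ m) * (1 - q / x * q ^ m)) := by
    field_simp
    ring
  rw [hfactor, hcert, gosperTerm_mul_cube hb, gosperTerm_succ, gosperCert]
  field_simp
  ring

lemma sum_gosperTerm_mul_cube (hq : q ≠ 0) (hx : x ≠ 0) (m : ℕ) (hqm : qpoch q q (2 * m) ≠ 0)
    (hb : qpoch b q (m + 2) ≠ 0) :
    (1 - b * q) * (1 - b * q ^ 2) * ∑ k ∈ Finset.range (m + 1), gosperTerm b q x k =
      (1 - b * q * x) * (1 - b * q ^ 2 / x) *
          ∑ k ∈ Finset.range m, gosperTerm (b * q ^ 3) q x k +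
        (1 - b * q) * (1 - b * q ^ 2) * (gosperTerm b q x m * gosperCert b q m) := by
  induction m with
  | zero =>
    have h0 : 1 - b ≠ 0 := by simpa using qpoch_ne_zero_iff.1 hb 0 (by omega)
    have h1 : 1 - b * q ≠ 0 := by simpa using qpoch_ne_zero_iff.1 hb 1 (by omega)
    have hcert : gosperCert b q 0 = 1 := by
      simp [gosperCert, mul_comm, div_self (mul_ne_zero h0 h1)]
    simp [gosperTerm_zero, hcert]
  | succ m ih =>
    specialize ih (qpoch_ne_zero_of_le (by omega) hqm) (qpoch_ne_zero_of_le (by omega) hb)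
    rw [Finset.sum_range_succ _ (m + 1), Finset.sum_range_succ (gosperTerm (b * q ^ 3) q x) m]
    linear_combination ih + gosperTerm_wz hq hx hqm hb

lemma gosperProd_succ (n : ℕ) :
    gosperProd (n + 1) q x = gosperProd n q x *
      ((1 - q * x * q ^ (3 * n)) * (1 - q ^ 2 / x * q ^ (3 * n)) /
        ((1 - q * q ^ (3 * n)) * (1 - q ^ 2 * q ^ (3 * n)))) := by
  simp only [gosperProd, qpoch_succ, pow_mul]
  rw [div_mul_div_comm, mul_mul_mul_comm, mul_mul_mul_comm (qpoch q (q ^ 3) n)]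

lemma gosperProd_one_div (n : ℕ) :
    gosperProd n q (1 / x) = (qpoch (q ^ 2 * x) (q ^ 3) n * qpoch (q / x) (q ^ 3) n) /
      (qpoch q (q ^ 3) n * qpoch (q ^ 2) (q ^ 3) n) := by
  rw [gosperProd, mul_one_div, div_div_eq_mul_div, div_one, mul_comm (qpoch (q / x) _ _)]

theorem sum_gosperTerm (hq : q ≠ 0) (hx : x ≠ 0) (n : ℕ) (hqn : qpoch q q (3 * n) ≠ 0) :
    ∑ k ∈ Finset.range (n + 1), gosperTerm (q ^ (3 * n))⁻¹ q x k = gosperProd n q x := by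
  induction n with
  | zero => simp [gosperTerm_zero, gosperProd, qpoch_zero]
  | succ n ih =>
    specialize ih (qpoch_ne_zero_of_le (by omega) hqn)
    have hq1 : 1 - q * q ^ (3 * n) ≠ 0 := qpoch_ne_zero_iff.1 hqn (3 * n) (by omega)
    have hq2 : 1 - q ^ 2 * q ^ (3 * n) ≠ 0 := by
      rw [sq, mul_assoc, ← pow_succ']
      exact qpoch_ne_zero_iff.1 hqn (3 * n + 1) (by omega)
    have hN : q ^ (3 * n) ≠ 0 := pow_ne_zero _ hq
    have hcert : gosperCert (q ^ (3 * (n + 1)))⁻¹ q (n + 1) = 0 := by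
      simp [gosperCert, hq]
    have hcube : (q ^ (3 * (n + 1)))⁻¹ * q ^ 3 = (q ^ (3 * n))⁻¹ := by
      rw [mul_add_one, pow_add]
      field_simp
    have hsum := sum_gosperTerm_mul_cube hq hx (n + 1) (qpoch_ne_zero_of_le (by omega) hqn)
      (qpoch_inv_pow_ne_zero hq (by omega) hqn)
    rw [hcube, ih, hcert, mul_zero, mul_zero, add_zero, mul_add_one, pow_add] at hsum
    rw [gosperProd_succ, mul_add_one, pow_add, mul_div_assoc', eq_div_iff (mul_ne_zero hq1 hq2)]
    field_simp at hsum ⊢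
    linear_combination hsum

end GosperSum

section ExtendedGosperSum

variable {a q x s : ℂ}

lemma qpoch_mul_qpoch_div_add_one_div (hx : x ≠ 0) (k : ℕ) :
    qpoch x q k * qpoch (q / x) q k + qpoch (1 / x) q k * qpoch (q / (1 / x)) q k =
      (1 + q ^ k) * (qpoch x q k * qpoch (1 / x) q k) := by
  have hq_div : q / x = 1 / x * q := by ring
  have hq_mul : q / (1 / x) = x * q := by simp [mul_comm]
  rw [hq_div, hq_mul]
  cases k with
  | zero => simp only [qpoch_zero, pow_zero]; norm_num
  | succ k =>
    rw [qpoch_succ_left x, qpoch_succ_left (1 / x), qpoch_succ (x * q), qpoch_succ (1 / x * q)]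
    field_simp
    ring

lemma qpoch_sq_mul_one_add_pow (k : ℕ) :
    qpoch (s ^ 2) (s ^ 2) k * qpoch (-1) (s ^ 2) k * qpoch s (s ^ 2) k * qpoch (-s) (s ^ 2) k *
      (1 + (s ^ 2) ^ k) = 2 * qpoch (s ^ 2) (s ^ 2) (2 * k) := by
  calc
    _ = qpoch (s ^ 2) (s ^ 2) k * (qpoch (-1) (s ^ 2) k * (1 + (s ^ 2) ^ k)) *
          (qpoch s (s ^ 2) k * qpoch (-s) (s ^ 2) k) := by ring
    _ = 2 * (qpoch s (s ^ 2) k * qpoch (-s) (s ^ 2) k) *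
          (qpoch (s ^ 2) (s ^ 2) k * qpoch (-s ^ 2) (s ^ 2) k) := by
      rw [qpoch_neg_one_mul]; ring
    _ = 2 * qpoch (s ^ 2) (s ^ 2) (2 * k) := by
      rw [qpoch_mul_qpoch_neg, qpoch_mul_qpoch_neg, qpoch_two_mul, mul_assoc, sq (s ^ 2)]

lemma gosperTerm_add_gosperTerm_one_div (hx : x ≠ 0) {k : ℕ} (hk : 1 + (s ^ 2) ^ k ≠ 0) :
    gosperTerm a (s ^ 2) x k + gosperTerm a (s ^ 2) (1 / x) k =
      2 * gosperExtTerm a (s ^ 2) x s k := by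
  have hden : qpoch (s ^ 2) (s ^ 2) (2 * k) =
      qpoch (s ^ 2) (s ^ 2) k * qpoch (-1) (s ^ 2) k * qpoch s (s ^ 2) k * qpoch (-s) (s ^ 2) k *
        (1 + (s ^ 2) ^ k) / 2 := by
    rw [qpoch_sq_mul_one_add_pow, mul_div_cancel_left₀ _ two_ne_zero]
  rw [gosperTerm, gosperTerm, ← add_mul, ← add_div, ← mul_add,
    qpoch_mul_qpoch_div_add_one_div hx, hden, gosperExtTerm]
  field_simp

theorem sum_gosperExtTerm_of_qpoch_ne_zero (hs : s ≠ 0) (hx : x ≠ 0) (n : ℕ)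
    (hn : qpoch (s ^ 2) (s ^ 2) (3 * n) ≠ 0) :
    ∑ k ∈ Finset.range (n + 1), gosperExtTerm ((s ^ 2) ^ (3 * n))⁻¹ (s ^ 2) x s k =
      1 / 2 * gosperProd n (s ^ 2) x + 1 / 2 * gosperProd n (s ^ 2) (1 / x) := by
  have hs2 : s ^ 2 ≠ 0 := pow_ne_zero 2 hs
  rw [← sum_gosperTerm hs2 hx n hn, ← sum_gosperTerm hs2 (one_div_ne_zero hx) n hn, ← mul_add,
    ← Finset.sum_add_distrib, Finset.mul_sum]
  refine Finset.sum_congr rfl fun k hk => ?_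
  have hqk : qpoch (s ^ 2) (s ^ 2) (2 * k) ≠ 0 :=
    qpoch_ne_zero_of_le (by have := Finset.mem_range.1 hk; omega) hn
  have hadd : 1 + (s ^ 2) ^ k ≠ 0 :=
    right_ne_zero_of_mul (qpoch_sq_mul_one_add_pow k ▸ mul_ne_zero two_ne_zero hqk)
  rw [gosperTerm_add_gosperTerm_one_div hx hadd]
  ring

end ExtendedGosperSum

section Continuity

lemma eventually_qpoch_ne_zero {f g : ℂ → ℂ} (hf : Differentiable ℂ f) (hg : Differentiable ℂ g)
    {m : ℕ} {z : ℂ} (hz : qpoch (f z) (g z) m ≠ 0) (t₀ : ℂ) :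
    ∀ᶠ t in 𝓝[≠] t₀, qpoch (f t) (g t) m ≠ 0 := by
  have hdiff : Differentiable ℂ fun t => qpoch (f t) (g t) m := by
    unfold qpoch
    fun_prop
  have hanalytic : AnalyticOnNhd ℂ (fun t => qpoch (f t) (g t) m) Set.univ :=
    fun t _ => hdiff.analyticAt t
  by_contra hfreq
  exact hz (hanalytic.eqOn_zero_of_preconnected_of_frequently_eq_zero isPreconnected_univ
    (Set.mem_univ t₀) (by simpa only [not_eventually, not_not] using hfreq) (Set.mem_univ z))

variable {X : Type*} [TopologicalSpace X] {t₀ : X} {a q s : X → ℂ} {x : ℂ}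

@[fun_prop]
lemma continuousAt_qpoch (ha : ContinuousAt a t₀) (hq : ContinuousAt q t₀) (k : ℕ) :
    ContinuousAt (fun t => qpoch (a t) (q t) k) t₀ := by
  unfold qpoch
  fun_prop

lemma continuousAt_gosperExtTerm (ha : ContinuousAt a t₀) (hq : ContinuousAt q t₀)
    (hs : ContinuousAt s t₀) {k : ℕ}
    (hden : qpoch (q t₀) (q t₀) k * qpoch (-1) (q t₀) k * qpoch (s t₀) (q t₀) k *
      qpoch (-s t₀) (q t₀) k * qpoch (a t₀) (q t₀) k ≠ 0) :
    ContinuousAt (fun t => gosperExtTerm (a t) (q t) x (s t) k) t₀ := by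
  unfold gosperExtTerm
  fun_prop (disch := assumption)

lemma continuousAt_gosperProd (hq : ContinuousAt q t₀) {n : ℕ}
    (hden : qpoch (q t₀) (q t₀ ^ 3) n * qpoch (q t₀ ^ 2) (q t₀ ^ 3) n ≠ 0) :
    ContinuousAt (fun t => gosperProd n (q t) x) t₀ := by
  unfold gosperProd
  fun_prop (disch := assumption)

end Continuity

theorem q_gosper_first_ext_ell_one (n : ℕ) (q x s : ℂ) (hs : s ^ 2 = q)
    (hq : q ≠ 0) (hx : x ≠ 0)
    (hden : ∀ k ≤ n,
      qpoch q q k * qpoch (-1) q k * qpoch s q k * qpoch (-s) q k *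
        qpoch (q ^ (-(3*n : ℤ))) q k ≠ 0)
    (hden2 : qpoch q (q^3) n * qpoch (q^2) (q^3) n ≠ 0) :
    ∑ k ∈ Finset.range (n+1),
      qpoch (q ^ (-(3*n : ℤ))) (q^3) k * (qpoch x q k * qpoch (1/x) q k) /
        (qpoch q q k * qpoch (-1) q k * qpoch s q k * qpoch (-s) q k *
          qpoch (q ^ (-(3*n : ℤ))) q k) * q^k
      = (1/2 : ℂ) * ((qpoch (q*x) (q^3) n * qpoch (q^2/x) (q^3) n) /
            (qpoch q (q^3) n * qpoch (q^2) (q^3) n))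
        + (1/2 : ℂ) * ((qpoch (q^2*x) (q^3) n * qpoch (q/x) (q^3) n) /
            (qpoch q (q^3) n * qpoch (q^2) (q^3) n)) := by
  subst hs
  have hpow : (s ^ 2) ^ (-(3 * n : ℤ)) = ((s ^ 2) ^ (3 * n))⁻¹ := by rw [zpow_neg]; norm_cast
  rw [hpow] at hden ⊢
  rw [← gosperProd_one_div]
  have hs : s ≠ 0 := ne_zero_pow two_ne_zero hq
  have hsq : ContinuousAt (fun t : ℂ => t ^ 2) s := by fun_prop
  have hlhs : ContinuousAt (fun t => ∑ k ∈ Finset.range (n + 1),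
      gosperExtTerm ((t ^ 2) ^ (3 * n))⁻¹ (t ^ 2) x t k) s :=
    tendsto_finsetSum _ fun k hk => continuousAt_gosperExtTerm
      ((hsq.pow _).inv₀ (pow_ne_zero _ hq)) hsq continuousAt_id
      (hden k (Nat.lt_succ_iff.1 (Finset.mem_range.1 hk)))
  have hrhs : ContinuousAt (fun t =>
      1 / 2 * gosperProd n (t ^ 2) x + 1 / 2 * gosperProd n (t ^ 2) (1 / x)) s :=
    ((continuousAt_gosperProd hsq hden2).const_mul _).add
      ((continuousAt_gosperProd hsq hden2).const_mul _)
  refine ((hlhs.eventuallyEq_nhds_iff_eventuallyEq_nhdsNE hrhs).1 ?_).eq_of_nhds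
  filter_upwards [eventually_qpoch_ne_zero (differentiable_pow 2) (differentiable_pow 2)
      (m := 3 * n) (z := 0) (by simp [qpoch]) s,
    (isOpen_ne.eventually_mem hs).filter_mono nhdsWithin_le_nhds] with t ht ht0
  exact sum_gosperExtTerm_of_qpoch_ne_zero ht0 hx n ht
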